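/- Let occ(σ) be the number of occurrences in σ of the mesh pattern Nr. 22, where an occurrence is a pair of indices i < j with a = σ_i < σ_j = b such that: every element before position i has value greater than b; every element strictly between positions i and j has value less than a; and every element after position j has value strictly between a and b. Let E(t,u) = Σ_{n≥0} t^n Σ_{σ∈K_n} u^{occ(σ)}. Then (1+t)^2·E(t,u) = ((1+t)^2 + t^2(1−u)·((1+t)^2 − A(t)^2))·A(t) as formal power series in t over ℚ[u]. -/

import Mathlib

/-- A permutation of `{0, …, n-1}` is a *king permutation* if consecutive entries
differ by more than 1 in absolute value. -/
def IsKing {n : ℕ} (σ : Equiv.Perm (Fin n)) : Prop :=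
  ∀ i : Fin n, ∀ h : (i : ℕ) + 1 < n,
    1 < |((σ ⟨(i : ℕ) + 1, h⟩ : ℕ) : ℤ) - ((σ i : ℕ) : ℤ)|

/-- `kingCount n = A_n`, the number of king permutations of length `n`. -/
noncomputable def kingCount (n : ℕ) : ℕ :=
  Nat.card {σ : Equiv.Perm (Fin n) // IsKing σ}

/-- `A(t)` regarded as a power series over `ℚ[u]` (constant-polynomial coefficients). -/
noncomputable def kingAu : PowerSeries (Polynomial ℚ) :=
  PowerSeries.mk fun n => (kingCount n : Polynomial ℚ)

/-- `u` viewed as a constant power series over `ℚ[u]`. -/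
noncomputable def U : PowerSeries (Polynomial ℚ) :=
  PowerSeries.C Polynomial.X

/-- `t`, the power series variable. -/
noncomputable def T : PowerSeries (Polynomial ℚ) :=
  PowerSeries.X

/-- An occurrence of the mesh pattern Nr. 22 in `σ`. -/
def OccP {n : ℕ} (σ : Equiv.Perm (Fin n)) (i j : Fin n) : Prop :=
  i < j ∧ σ i < σ j ∧
    (∀ k : Fin n, k < i → σ j < σ k) ∧
    (∀ k : Fin n, i < k → k < j → σ k < σ i) ∧
    (∀ k : Fin n, j < k → σ i < σ k ∧ σ k < σ j)

/-- The number of occurrences of the mesh pattern Nr. 22 in `σ`. -/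
noncomputable def occP {n : ℕ} (σ : Equiv.Perm (Fin n)) : ℕ :=
  Nat.card {p : Fin n × Fin n // OccP σ p.1 p.2}

-- `E(t,u) = Σ_{n≥0} t^n Σ_{σ∈K_n} u^{occ(σ)}`, a power series in `t` over `ℚ[u]`.
open Classical in
noncomputable def Etu : PowerSeries (Polynomial ℚ) :=
  PowerSeries.mk fun n =>
    ∑ σ : Equiv.Perm (Fin n),
      if IsKing σ then (Polynomial.X : Polynomial ℚ) ^ occP σ else 0

namespace KingPf

open Finset

/-- permutation lists of `0..len-1` -/
def IsPL (l : List ℕ) : Prop := l.Nodup ∧ ∀ x ∈ l, x < l.length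

def LKing (l : List ℕ) : Prop := l.IsChain (fun x y => x + 1 < y ∨ y + 1 < x)

/-- does not start with its maximum -/
def NM (l : List ℕ) : Prop := ∀ x ∈ l.head?, x + 1 ≠ l.length

def LOccAt (l : List ℕ) (i j : ℕ) : Prop :=
  ∃ (X : List ℕ) (a : ℕ) (Y : List ℕ) (b : ℕ) (Z : List ℕ),
    l = X ++ a :: (Y ++ b :: Z) ∧ X.length = i ∧ X.length + 1 + Y.length = j ∧ a < b ∧
    (∀ x ∈ X, b < x) ∧ (∀ y ∈ Y, y < a) ∧ (∀ z ∈ Z, a < z ∧ z < b)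

def toL {n : ℕ} (σ : Equiv.Perm (Fin n)) : List ℕ := List.ofFn (fun i => (σ i : ℕ))

lemma toL_length {n : ℕ} (σ : Equiv.Perm (Fin n)) : (toL σ).length = n := by simp [toL]

lemma toL_get {n : ℕ} (σ : Equiv.Perm (Fin n)) (k : ℕ) (hk : k < (toL σ).length) :
    (toL σ)[k] = (σ ⟨k, by simpa [toL] using hk⟩ : ℕ) := by simp [toL]

lemma toL_isPL {n : ℕ} (σ : Equiv.Perm (Fin n)) : IsPL (toL σ) := by
  refine ⟨?_, ?_⟩
  · rw [toL, List.nodup_ofFn]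
    intro a b h
    exact σ.injective (Fin.ext h)
  · intro x hx
    rw [toL_length]
    simp only [toL, List.mem_ofFn] at hx
    obtain ⟨i, rfl⟩ := hx
    exact (σ i).isLt

lemma toL_inj {n : ℕ} : Function.Injective (toL (n := n)) := by
  intro σ τ h
  have := List.ofFn_injective h
  ext i
  exact congrFun this i

lemma toL_surj {n : ℕ} (l : List ℕ) (hl : IsPL l) (hn : l.length = n) :
    ∃ σ : Equiv.Perm (Fin n), toL σ = l := by
  subst hn
  let f : Fin l.length → Fin l.length := fun i => ⟨l[i], hl.2 _ (List.getElem_mem _)⟩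
  have hf : Function.Injective f := by
    intro a b h
    have h' : l[(a:ℕ)] = l[(b:ℕ)] := by simpa [f] using h
    exact Fin.ext ((hl.1.getElem_inj_iff).1 h')
  refine ⟨Equiv.ofBijective f (Finite.injective_iff_bijective.1 hf), ?_⟩
  apply List.ext_getElem
  · simp [toL]
  · intro i h1 h2
    simp [toL, f]

lemma king_iff {n : ℕ} (σ : Equiv.Perm (Fin n)) : IsKing σ ↔ LKing (toL σ) := by
  rw [LKing, List.isChain_iff_getElem, IsKing]
  constructor
  · intro h i hi
    rw [toL_get, toL_get]
    rw [toL_length] at hi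
    have := h ⟨i, by omega⟩ hi
    rw [lt_abs] at this
    dsimp only at this
    omega
  · intro h i hi
    have := h i (by rw [toL_length]; exact hi)
    rw [toL_get, toL_get] at this
    rw [lt_abs]
    simp only [Fin.eta] at this
    omega

lemma occ_list (l : List ℕ) (i j : ℕ) : LOccAt l i j ↔
    ∃ (hij : i < j) (hj : j < l.length), l[i] < l[j] ∧
      (∀ k (hk : k < l.length), k < i → l[j] < l[k]) ∧
      (∀ k (hk : k < l.length), i < k → k < j → l[k] < l[i]) ∧
      (∀ k (hk : k < l.length), j < k → l[i] < l[k] ∧ l[k] < l[j]) := by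
  constructor
  · rintro ⟨X, a, Y, b, Z, rfl, rfl, rfl, hab, hX, hY, hZ⟩
    have e1 : ∀ h, (X ++ a :: (Y ++ b :: Z))[X.length]'h = a := by intro h; simp
    have e2 : ∀ h, (X ++ a :: (Y ++ b :: Z))[X.length + 1 + Y.length]'h = b := by
      intro h
      rw [List.getElem_append_right (by omega)]
      have : X.length + 1 + Y.length - X.length = Y.length + 1 := by omega
      simp [this]
    refine ⟨by omega, by simp; omega, ?_⟩
    simp only [e1, e2]
    refine ⟨hab, ?_, ?_, ?_⟩
    · intro k hk hki
      rw [List.getElem_append_left hki]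
      exact hX _ (List.getElem_mem _)
    · intro k hk h1 h2
      obtain ⟨m, rfl⟩ : ∃ m, k = X.length + (m + 1) := ⟨k - X.length - 1, by omega⟩
      rw [List.getElem_append_right (by omega)]
      simp only [Nat.add_sub_cancel_left, List.getElem_cons_succ]
      rw [List.getElem_append_left (by omega)]
      exact hY _ (List.getElem_mem _)
    · intro k hk h1
      obtain ⟨m, rfl⟩ : ∃ m, k = X.length + (Y.length + (m + 1) + 1) :=
        ⟨k - X.length - Y.length - 2, by omega⟩
      have hm : m < Z.length := by simp at hk; omega
      have e3 : (X ++ a :: (Y ++ b :: Z))[X.length + (Y.length + (m + 1) + 1)] = Z[m] := by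
        rw [List.getElem_append_right (by omega)]
        simp only [Nat.add_sub_cancel_left, List.getElem_cons_succ]
        rw [List.getElem_append_right (by omega)]
        simp only [Nat.add_sub_cancel_left, List.getElem_cons_succ]
      rw [e3]
      exact hZ _ (List.getElem_mem _)
  · rintro ⟨hij, hj, hab, h1, h2, h3⟩
    refine ⟨l.take i, l[i], (l.drop (i+1)).take (j - i - 1), l[j], l.drop (j+1), ?_, ?_, ?_, hab,
      ?_, ?_, ?_⟩
    · conv_lhs => rw [← List.take_append_drop i l]
      congr 1
      rw [List.drop_eq_getElem_cons (by omega)]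
      congr 1
      conv_lhs => rw [← List.take_append_drop (j - i - 1) (l.drop (i+1))]
      congr 1
      rw [List.drop_drop, ← List.drop_eq_getElem_cons]
      congr 1; omega
    · simp; omega
    · simp; omega
    · intro x hx
      rw [List.mem_take_iff_getElem] at hx
      obtain ⟨k, hk, rfl⟩ := hx
      exact h1 _ _ (by omega)
    · intro x hx
      rw [List.mem_take_iff_getElem] at hx
      obtain ⟨k, hk, rfl⟩ := hx
      rw [List.getElem_drop]
      simp at hk
      exact h2 _ _ (by omega) (by omega)
    · intro x hx
      rw [List.mem_drop_iff_getElem] at hx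
      obtain ⟨k, hk, rfl⟩ := hx
      exact h3 _ _ (by omega)

lemma occ_iff {n : ℕ} (σ : Equiv.Perm (Fin n)) (i j : Fin n) :
    OccP σ i j ↔ LOccAt (toL σ) i j := by
  rw [occ_list]
  simp only [toL_get, Fin.eta, OccP, Fin.lt_def]
  constructor
  · rintro ⟨h1, h2, h3, h4, h5⟩
    refine ⟨h1, by rw [toL_length]; exact j.2, h2, ?_, ?_, ?_⟩
    · intro k hk h; exact h3 _ h
    · intro k hk h h'; exact h4 _ h h'
    · intro k hk h; exact h5 _ h
  · rintro ⟨h1, hj, h2, h3, h4, h5⟩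
    refine ⟨h1, h2, ?_, ?_, ?_⟩
    · intro k h; exact h3 k (by rw [toL_length]; exact k.2) h
    · intro k h h'; exact h4 k (by rw [toL_length]; exact k.2) h h'
    · intro k h; exact h5 k (by rw [toL_length]; exact k.2) h

lemma occ_unique {n : ℕ} (σ : Equiv.Perm (Fin n)) (i j i' j' : Fin n)
    (h : OccP σ i j) (h' : OccP σ i' j') : i = i' ∧ j = j' := by
  have key : ∀ i j i' j' : Fin n, OccP σ i j → OccP σ i' j' → i ≤ i' → i = i' := by
    rintro i j i' j' ⟨h1, h2, h3, h4, h5⟩ ⟨g1, g2, g3, g4, g5⟩ hle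
    by_contra hne
    have hlt : i < i' := lt_of_le_of_ne hle hne
    have a1 := g3 i hlt
    have : j' < j := by
      by_contra hc
      rcases eq_or_lt_of_le (not_lt.1 hc) with e | e
      · subst e; exact absurd (a1.trans h2) (lt_irrefl _)
      · exact absurd (a1.trans (h5 _ e).1) (lt_irrefl _)
    have := (g5 j this).2
    exact absurd (this.trans (a1.trans h2)) (lt_irrefl _)
  have hi : i = i' := by
    rcases le_total i i' with hl | hl
    · exact key i j i' j' h h' hl
    · exact (key i' j' i j h' h hl).symm
  subst hi
  refine ⟨rfl, ?_⟩
  obtain ⟨h1, h2, h3, h4, h5⟩ := h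
  obtain ⟨g1, g2, g3, g4, g5⟩ := h'
  rcases lt_trichotomy j j' with hl | hl | hl
  · exact absurd ((g4 j h1 hl).trans h2) (lt_irrefl _)
  · exact hl
  · exact absurd ((h4 j' g1 hl).trans g2) (lt_irrefl _)

open Classical in
lemma occP_eq {n : ℕ} (σ : Equiv.Perm (Fin n)) :
    occP σ = if ∃ i j, LOccAt (toL σ) i j then 1 else 0 := by
  have hs : Subsingleton {p : Fin n × Fin n // OccP σ p.1 p.2} := by
    constructor
    rintro ⟨⟨a, b⟩, h⟩ ⟨⟨c, d⟩, h'⟩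
    have := occ_unique σ a b c d h h'
    simp [this.1, this.2]
  rw [occP]
  split_ifs with h
  · obtain ⟨i, j, h⟩ := h
    have hb := h
    rw [occ_list] at hb
    obtain ⟨hij, hj, -⟩ := hb
    rw [toL_length] at hj
    have : Nonempty {p : Fin n × Fin n // OccP σ p.1 p.2} :=
      ⟨⟨(⟨i, hij.trans hj⟩, ⟨j, hj⟩), by rw [occ_iff]; exact h⟩⟩
    exact Nat.card_unique
  · have : IsEmpty {p : Fin n × Fin n // OccP σ p.1 p.2} := by
      constructor
      rintro ⟨⟨a, b⟩, h'⟩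
      exact h ⟨a, b, (occ_iff σ a b).1 h'⟩
    simp

lemma LOcc_unique (l : List ℕ) (hl : IsPL l) (i j i' j' : ℕ)
    (h : LOccAt l i j) (h' : LOccAt l i' j') : i = i' ∧ j = j' := by
  obtain ⟨n, hn⟩ : ∃ n, l.length = n := ⟨_, rfl⟩
  obtain ⟨σ, rfl⟩ := toL_surj l hl hn
  clear hn
  have hb := (occ_list _ _ _).1 h
  have hb' := (occ_list _ _ _).1 h'
  obtain ⟨hij, hj, -⟩ := hb
  obtain ⟨hij', hj', -⟩ := hb'
  have := occ_unique σ ⟨i, hij.trans (toL_length σ ▸ hj)⟩ ⟨j, toL_length σ ▸ hj⟩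
    ⟨i', hij'.trans (toL_length σ ▸ hj')⟩ ⟨j', toL_length σ ▸ hj'⟩
    ((occ_iff _ _ _).2 h) ((occ_iff _ _ _).2 h')
  simpa using this

/-- finset of permutation lists -/
def L (n : ℕ) : Finset (List ℕ) := Finset.univ.image (toL (n := n))

lemma mem_L {n : ℕ} {l : List ℕ} : l ∈ L n ↔ IsPL l ∧ l.length = n := by
  simp only [L, Finset.mem_image, Finset.mem_univ, true_and]
  constructor
  · rintro ⟨σ, rfl⟩; exact ⟨toL_isPL σ, toL_length σ⟩
  · rintro ⟨h, h'⟩; exact toL_surj l h h'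

def build (X Y Z : List ℕ) : List ℕ :=
  X.map (· + (Y.length + Z.length + 2)) ++ Y.length ::
    (Y ++ (Y.length + Z.length + 1) :: Z.map (· + (Y.length + 1)))

lemma build_length (X Y Z : List ℕ) :
    (build X Y Z).length = X.length + Y.length + Z.length + 2 := by
  simp [build]; omega

lemma build_occ (X Y Z : List ℕ) (hY : IsPL Y) (hZ : IsPL Z) :
    LOccAt (build X Y Z) X.length (X.length + 1 + Y.length) := by
  refine ⟨_, _, _, _, _, rfl, by simp, by simp, by omega, ?_, hY.2, ?_⟩
  · intro x hx; simp at hx; omega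
  · intro x hx
    simp only [List.mem_map] at hx
    obtain ⟨z, hz, rfl⟩ := hx
    have := hZ.2 z hz
    omega

lemma build_isPL (X Y Z : List ℕ) (hX : IsPL X) (hY : IsPL Y) (hZ : IsPL Z) :
    IsPL (build X Y Z) := by
  have hx := hX.2
  have hy := hY.2
  have hz := hZ.2
  constructor
  · have nX : (X.map (· + (Y.length + Z.length + 2))).Nodup :=
      hX.1.map (add_left_injective _)
    have nZ : (Z.map (· + (Y.length + 1))).Nodup := hZ.1.map (add_left_injective _)
    simp only [build, List.nodup_append, List.nodup_cons, nX, nZ, hY.1, List.mem_append,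
      List.mem_cons, List.mem_map]
    grind
  · intro x hxx
    rw [build_length]
    simp only [build, List.mem_append, List.mem_cons, List.mem_map] at hxx
    grind

lemma build_inj (X Y Z X' Y' Z' : List ℕ) (hX : IsPL X) (hY : IsPL Y) (hZ : IsPL Z)
    (hY' : IsPL Y') (hZ' : IsPL Z')
    (h : build X Y Z = build X' Y' Z') : X = X' ∧ Y = Y' ∧ Z = Z' := by
  have o := build_occ X Y Z hY hZ
  have o' := build_occ X' Y' Z' hY' hZ'
  rw [← h] at o'
  obtain ⟨e1, e2⟩ := LOcc_unique _ (build_isPL X Y Z hX hY hZ) _ _ _ _ o o'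
  have e3 : Y.length = Y'.length := by omega
  have e4 : Z.length = Z'.length := by
    have := congrArg List.length h
    rw [build_length, build_length] at this
    omega
  unfold build at h
  rw [e3, e4] at h
  obtain ⟨f1, f2⟩ := List.append_inj h (by simp [e1])
  rw [List.cons_inj_right] at f2
  obtain ⟨f3, f4⟩ := List.append_inj f2 e3
  rw [List.cons_inj_right] at f4
  exact ⟨List.map_injective_iff.2 (add_left_injective _) f1, f3,
    List.map_injective_iff.2 (add_left_injective _) f4⟩

lemma pl_toFinset {l : List ℕ} (h : IsPL l) : l.toFinset = Finset.range l.length := by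
  apply Finset.eq_of_subset_of_card_le
  · intro x hx; simp at hx ⊢; exact h.2 x hx
  · rw [List.toFinset_card_of_nodup h.1]; simp

lemma pl_mem {l : List ℕ} (h : IsPL l) (x : ℕ) : x ∈ l ↔ x < l.length := by
  rw [← Finset.mem_range, ← pl_toFinset h, List.mem_toFinset]

lemma len_of_mem {l : List ℕ} (h : l.Nodup) (a : ℕ) (hm : ∀ x, x ∈ l ↔ x < a) : l.length = a := by
  rw [← List.toFinset_card_of_nodup h]
  have : l.toFinset = Finset.range a := by ext; simp [hm]
  simp [this]

lemma sub_isPL (l : List ℕ) (c : ℕ) (h : l.Nodup) (hm : ∀ x ∈ l, c ≤ x ∧ x < c + l.length) :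
    IsPL (l.map (· - c)) ∧ (l.map (· - c)).map (· + c) = l := by
  refine ⟨⟨?_, ?_⟩, ?_⟩
  · apply List.Nodup.map_on _ h
    intro x hx y hy hxy
    have := hm x hx
    have := hm y hy
    omega
  · intro x hx
    simp only [List.mem_map, List.length_map] at hx ⊢
    obtain ⟨y, hy, rfl⟩ := hx
    have := hm y hy
    omega
  · rw [List.map_map]
    conv_rhs => rw [← List.map_id l]
    apply List.map_congr_left
    intro x hx
    have := hm x hx
    simp; omega

lemma occ_build (l : List ℕ) (hl : IsPL l) (i j : ℕ) (h : LOccAt l i j) :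
    ∃ X Y Z, IsPL X ∧ IsPL Y ∧ IsPL Z ∧ l = build X Y Z := by
  obtain ⟨X, a, Y, b, Z, rfl, -, -, hab, hX, hY, hZ⟩ := h
  have hm := pl_mem hl
  have hnd := hl.1
  simp only [List.nodup_append, List.nodup_cons] at hnd
  have hlen : (X ++ a :: (Y ++ b :: Z)).length = X.length + Y.length + Z.length + 2 := by
    simp; omega
  rw [hlen] at hm
  simp only [List.mem_append, List.mem_cons] at hm
  have hb := (hm b).1 (by simp)
  have nY : Y.Nodup := hnd.2.1.2.1
  have nX : X.Nodup := hnd.1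
  have nZ : Z.Nodup := hnd.2.1.2.2.1.2
  have lY : Y.length = a := by
    apply len_of_mem nY
    intro x
    constructor
    · exact hY x
    · intro hx
      have := (hm x).2 (by omega)
      rcases this with h | h | h | h | h
      · have := hX x h; omega
      · omega
      · exact h
      · omega
      · have := hZ x h; omega
  have lYZ : (a :: (Y ++ b :: Z)).length = b + 1 := by
    apply len_of_mem
    · exact (List.nodup_append.1 hl.1).2.1
    intro x
    simp only [List.mem_append, List.mem_cons]
    constructor
    · rintro (h | h | h | h)
      · omega
      · have := hY x h; omega
      · omega
      · have := hZ x h; omega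
    · intro hx
      rcases (hm x).2 (by omega) with h | h
      · have := hX x h; omega
      · exact h
  simp only [List.length_cons, List.length_append] at lYZ
  have eb : b = Y.length + Z.length + 1 := by omega
  obtain ⟨pZ, eZ⟩ := sub_isPL Z (Y.length + 1) nZ (by
    intro z hz; have := hZ z hz; omega)
  obtain ⟨pX, eX⟩ := sub_isPL X (Y.length + Z.length + 2) nX (by
    intro x hx; have := hX x hx
    have := (hm x).1 (Or.inl hx)
    omega)
  refine ⟨_, Y, _, pX, ⟨nY, fun y hy => by rw [lY]; exact hY y hy⟩, pZ, ?_⟩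
  unfold build
  simp only [List.length_map]
  rw [eX, eZ, eb, lY]

lemma map_king (l : List ℕ) (c : ℕ) : LKing (l.map (· + c)) ↔ LKing l := by
  unfold LKing
  rw [List.isChain_map]
  have : (fun a b : ℕ => a + c + 1 < b + c ∨ b + c + 1 < a + c) =
      (fun x y => x + 1 < y ∨ y + 1 < x) := by
    ext a b; omega
  rw [this]

lemma build_king (X Y Z : List ℕ) (hX : IsPL X) (hY : IsPL Y) (hZ : IsPL Z) :
    LKing (build X Y Z) ↔
      (LKing X ∧ (LKing Y ∧ NM Y) ∧ (LKing Z ∧ NM Z)) ∧ ¬ (Y = [] ∧ Z = []) := by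
  have kX := map_king X (Y.length + Z.length + 2)
  have kZ := map_king Z (Y.length + 1)
  have hx := hX.2
  have hy := hY.2
  have hz := hZ.2
  unfold LKing at *
  unfold build
  rw [List.isChain_append, List.isChain_cons, List.isChain_append, List.isChain_cons, kX, kZ]
  have c1 : ∀ x ∈ (X.map (· + (Y.length + Z.length + 2))).getLast?,
      ∀ y ∈ (Y.length :: (Y ++ (Y.length + Z.length + 1) ::
        Z.map (· + (Y.length + 1)))).head?, x + 1 < y ∨ y + 1 < x := by
    intro x hx y hy
    simp at hx hy
    obtain ⟨a, -, rfl⟩ := hx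
    omega
  have c2 : ∀ x ∈ Y.getLast?, ∀ y ∈ ((Y.length + Z.length + 1) ::
        Z.map (· + (Y.length + 1))).head?, x + 1 < y ∨ y + 1 < x := by
    intro x hx y hh
    simp at hh
    have := hy x (List.mem_of_mem_getLast? hx)
    omega
  have c3 : (∀ y ∈ (Z.map (· + (Y.length + 1))).head?,
      Y.length + Z.length + 1 + 1 < y ∨ y + 1 < Y.length + Z.length + 1) ↔ NM Z := by
    unfold NM
    cases Z with
    | nil => simp
    | cons z Z =>
      have := hz z (by simp)
      simp at this ⊢
      omega
  have c4 : (∀ y ∈ (Y ++ (Y.length + Z.length + 1) :: Z.map (· + (Y.length + 1))).head?,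
      Y.length + 1 < y ∨ y + 1 < Y.length) ↔ NM Y ∧ ¬ (Y = [] ∧ Z = []) := by
    unfold NM
    cases Y with
    | nil => 
      simp
      exact List.length_pos_iff
    | cons y Y =>
      have := hy y (by simp)
      simp at this ⊢
      omega
  rw [c3, c4]
  tauto

open Classical in
noncomputable def KK (n : ℕ) : Finset (List ℕ) := (L n).filter LKing

open Classical in
noncomputable def BB (n : ℕ) : Finset (List ℕ) := (L n).filter (fun l => LKing l ∧ NM l)

open Classical in
noncomputable def DD (n : ℕ) : Finset (List ℕ) :=
  (L n).filter (fun l => LKing l ∧ ∃ i j, LOccAt l i j)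

lemma mem_KK {n : ℕ} {l : List ℕ} : l ∈ KK n ↔ (IsPL l ∧ l.length = n) ∧ LKing l := by
  simp [KK, mem_L]

lemma mem_BB {n : ℕ} {l : List ℕ} : l ∈ BB n ↔ (IsPL l ∧ l.length = n) ∧ LKing l ∧ NM l := by
  simp [BB, mem_L]

lemma mem_DD {n : ℕ} {l : List ℕ} :
    l ∈ DD n ↔ (IsPL l ∧ l.length = n) ∧ LKing l ∧ ∃ i j, LOccAt l i j := by
  simp [DD, mem_L]

lemma kingCount_eq (n : ℕ) : kingCount n = #(KK n) := by
  classical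
  rw [kingCount, Nat.card_eq_fintype_card, Fintype.card_subtype]
  have : KK n = (Finset.univ.filter (fun σ : Equiv.Perm (Fin n) => IsKing σ)).image toL := by
    simp only [KK, L, Finset.filter_image, king_iff]
  rw [this, Finset.card_image_of_injective _ toL_inj]

lemma cons_isPL (l : List ℕ) : IsPL (l.length :: l) ↔ IsPL l := by
  constructor
  · rintro ⟨h1, h2⟩
    rw [List.nodup_cons] at h1
    refine ⟨h1.2, fun x hx => ?_⟩
    have := h2 x (by simp [hx])
    rw [List.length_cons] at this
    have hne : x ≠ l.length := fun e => h1.1 (e ▸ hx)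
    omega
  · rintro ⟨h1, h2⟩
    refine ⟨List.nodup_cons.2 ⟨fun h => lt_irrefl _ (h2 _ h), h1⟩, ?_⟩
    intro x hx
    rw [List.length_cons]
    rcases List.mem_cons.1 hx with h | h
    · omega
    · have := h2 x h; omega

lemma cons_king (l : List ℕ) (h : IsPL l) : LKing (l.length :: l) ↔ LKing l ∧ NM l := by
  unfold LKing NM
  rw [List.isChain_cons, and_comm]
  apply and_congr_right
  intro _
  apply forall_congr'; intro x
  apply forall_congr'; intro hx
  have := h.2 x (List.mem_of_mem_head? hx)
  omega

lemma KK_succ (n : ℕ) : #(KK (n+1)) = #(BB (n+1)) + #(BB n) := by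
  classical
  rw [← Finset.card_filter_add_card_filter_not (s := KK (n+1)) NM]
  congr 1
  · congr 1; ext l; simp [mem_KK, mem_BB]; tauto
  · rw [← Finset.card_image_of_injective (BB n) (f := fun l => n :: l)
      (List.cons_injective)]
    congr 1
    ext l
    simp only [Finset.mem_filter, mem_KK, Finset.mem_image, mem_BB]
    constructor
    · rintro ⟨⟨⟨h1, h2⟩, h3⟩, h4⟩
      cases l with
      | nil => simp at h2
      | cons x l =>
        simp only [NM, List.head?_cons, Option.mem_some_iff, forall_eq', List.length_cons,
          not_not, add_left_inj] at h4
        simp only [List.length_cons, add_left_inj] at h2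
        subst h4
        rw [cons_isPL] at h1
        rw [cons_king _ h1] at h3
        exact ⟨l, ⟨⟨h1, h2⟩, h3⟩, by rw [h2]⟩
    · rintro ⟨l, ⟨⟨h1, rfl⟩, h3⟩, rfl⟩
      refine ⟨⟨⟨(cons_isPL l).2 h1, rfl⟩, (cons_king l h1).2 h3⟩, ?_⟩
      simp [NM]

lemma KK_zero : #(KK 0) = #(BB 0) := by
  congr 1; ext l
  simp only [mem_KK, mem_BB]
  constructor
  · rintro ⟨⟨h1, h2⟩, h3⟩
    refine ⟨⟨h1, h2⟩, h3, ?_⟩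
    rw [List.length_eq_zero_iff] at h2
    subst h2
    simp [NM]
  · tauto

/-- counting series of a family of finsets -/
noncomputable def gf {α : Type} (F : ℕ → Finset α) : PowerSeries (Polynomial ℚ) :=
  PowerSeries.mk fun n => ((#(F n) : ℕ) : Polynomial ℚ)

def pairF {α β : Type} [DecidableEq α] [DecidableEq β] (F : ℕ → Finset α) (G : ℕ → Finset β)
    (n : ℕ) : Finset (α × β) :=
  (antidiagonal n).biUnion (fun p => F p.1 ×ˢ G p.2)

lemma mem_pairF {α β : Type} [DecidableEq α] [DecidableEq β] (F : ℕ → Finset α)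
    (G : ℕ → Finset β) (n : ℕ) (x : α × β) :
    x ∈ pairF F G n ↔ ∃ i j, i + j = n ∧ x.1 ∈ F i ∧ x.2 ∈ G j := by
  simp [pairF]

lemma gf_pair {α β : Type} [DecidableEq α] [DecidableEq β] (F : ℕ → Finset α) (G : ℕ → Finset β)
    (hF : ∀ i j a, a ∈ F i → a ∈ F j → i = j) (hG : ∀ i j a, a ∈ G i → a ∈ G j → i = j) :
    gf (pairF F G) = gf F * gf G := by
  ext1 n
  rw [PowerSeries.coeff_mul]
  simp only [gf, PowerSeries.coeff_mk]
  rw [pairF, Finset.card_biUnion]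
  · push_cast [Finset.card_product]
    rfl
  · intro x hx y hy hxy
    rw [Function.onFun, Finset.disjoint_left]
    intro p hp hq
    rw [Finset.mem_product] at hp hq
    exact hxy (Prod.ext (hF _ _ _ hp.1 hq.1) (hG _ _ _ hp.2 hq.2))

lemma KK_grad : ∀ i j a, a ∈ KK i → a ∈ KK j → i = j := by
  intro i j a h h'
  rw [mem_KK] at h h'
  exact h.1.2.symm.trans h'.1.2

lemma BB_grad : ∀ i j a, a ∈ BB i → a ∈ BB j → i = j := by
  intro i j a h h'
  rw [mem_BB] at h h'
  exact h.1.2.symm.trans h'.1.2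

lemma mem_triple (n : ℕ) (X Y Z : List ℕ) :
    (X, Y, Z) ∈ pairF KK (pairF BB BB) n ↔
      (IsPL X ∧ IsPL Y ∧ IsPL Z) ∧ X.length + Y.length + Z.length = n ∧
      (LKing X ∧ (LKing Y ∧ NM Y) ∧ (LKing Z ∧ NM Z)) := by
  simp only [mem_pairF, mem_KK, mem_BB]
  constructor
  · rintro ⟨i, j, rfl, h1, i', j', rfl, h2, h3⟩
    refine ⟨⟨h1.1.1, h2.1.1, h3.1.1⟩, ?_, h1.2, h2.2, h3.2⟩
    omega
  · rintro ⟨⟨h1, h2, h3⟩, rfl, h4, h5, h6⟩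
    exact ⟨_, _, by omega, ⟨⟨h1, rfl⟩, h4⟩, _, _, rfl, ⟨⟨h2, rfl⟩, h5⟩, ⟨h3, rfl⟩, h6⟩

lemma nil_good : IsPL [] ∧ LKing [] ∧ NM [] := by
  simp [IsPL, LKing, NM]

lemma DD_count (n : ℕ) : #(DD (n+2)) + #(KK n) = #(pairF KK (pairF BB BB) n) := by
  classical
  rw [← Finset.card_filter_add_card_filter_not (s := pairF KK (pairF BB BB) n)
    (fun p => ¬ (p.2.1 = [] ∧ p.2.2 = []))]
  congr 1
  · symm
    apply Finset.card_bij (fun p _ => build p.1 p.2.1 p.2.2)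
    · rintro ⟨X, Y, Z⟩ h
      rw [Finset.mem_filter, mem_triple] at h
      obtain ⟨⟨⟨h1, h2, h3⟩, h4, h5⟩, h6⟩ := h
      rw [mem_DD]
      refine ⟨⟨build_isPL X Y Z h1 h2 h3, ?_⟩, (build_king X Y Z h1 h2 h3).2 ⟨h5, h6⟩,
        _, _, build_occ X Y Z h2 h3⟩
      rw [build_length, h4]
    · rintro ⟨X, Y, Z⟩ h ⟨X', Y', Z'⟩ h' e
      rw [Finset.mem_filter, mem_triple] at h h'
      obtain ⟨⟨⟨h1, h2, h3⟩, -⟩, -⟩ := h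
      obtain ⟨⟨⟨h1', h2', h3'⟩, -⟩, -⟩ := h'
      obtain ⟨rfl, rfl, rfl⟩ := build_inj X Y Z X' Y' Z' h1 h2 h3 h2' h3' e
      rfl
    · intro l hl
      rw [mem_DD] at hl
      obtain ⟨⟨h1, h2⟩, h3, i, j, h4⟩ := hl
      obtain ⟨X, Y, Z, pX, pY, pZ, rfl⟩ := occ_build l h1 i j h4
      rw [build_king X Y Z pX pY pZ] at h3
      rw [build_length] at h2
      refine ⟨(X, Y, Z), ?_, rfl⟩
      rw [Finset.mem_filter, mem_triple]
      exact ⟨⟨⟨pX, pY, pZ⟩, by omega, h3.1⟩, h3.2⟩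
  · apply Finset.card_bij (fun X _ => (X, [], []))
    · intro X hX
      rw [mem_KK] at hX
      rw [Finset.mem_filter, mem_triple]
      exact ⟨⟨⟨hX.1.1, nil_good.1, nil_good.1⟩, by simpa using hX.1.2, hX.2, nil_good.2,
        nil_good.2⟩, by simp⟩
    · intro X _ Y _ h
      exact (Prod.ext_iff.1 h).1
    · rintro ⟨X, Y, Z⟩ h
      rw [Finset.mem_filter, mem_triple] at h
      obtain ⟨⟨⟨h1, -⟩, h4, h5, -⟩, h6⟩ := h
      rw [not_not] at h6
      obtain ⟨rfl, rfl⟩ := h6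
      exact ⟨X, mem_KK.2 ⟨⟨h1, by simpa using h4⟩, h5⟩, rfl⟩

lemma DD_small (n : ℕ) (hn : n < 2) : #(DD n) = 0 := by
  rw [Finset.card_eq_zero, Finset.eq_empty_iff_forall_notMem]
  intro l hl
  rw [mem_DD] at hl
  obtain ⟨⟨h1, h2⟩, h3, i, j, h4⟩ := hl
  obtain ⟨hij, hj, -⟩ := (occ_list _ _ _).1 h4
  omega

lemma gf_DD : gf DD + T ^ 2 * gf KK = T ^ 2 * (gf KK * (gf BB * gf BB)) := by
  rw [← gf_pair BB BB BB_grad BB_grad, ← gf_pair KK _ KK_grad]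
  · ext1 n
    rw [map_add, T, PowerSeries.coeff_X_pow_mul', PowerSeries.coeff_X_pow_mul']
    split_ifs with h
    · obtain ⟨m, rfl⟩ := Nat.exists_eq_add_of_le' h
      simp only [gf, PowerSeries.coeff_mk, Nat.add_sub_cancel]
      rw [← DD_count]
      push_cast
      rfl
    · simp [gf, DD_small n (by omega)]
  · intro i j a h h'
    rw [mem_pairF] at h h'
    obtain ⟨p, q, rfl, h1, h2⟩ := h
    obtain ⟨p', q', rfl, h1', h2'⟩ := h'
    rw [BB_grad _ _ _ h1 h1', BB_grad _ _ _ h2 h2']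

lemma gf_KK : gf KK = (1 + T) * gf BB := by
  ext1 n
  rw [add_mul, one_mul, map_add, T]
  cases n with
  | zero => simp [gf, KK_zero]
  | succ n =>
    rw [PowerSeries.coeff_succ_X_mul]
    simp only [gf, PowerSeries.coeff_mk, KK_succ]
    push_cast
    rfl

lemma kingAu_eq : kingAu = gf KK := by
  ext1 n
  simp [kingAu, gf, kingCount_eq]

lemma Etu_eq : Etu = gf KK + (U - 1) * gf DD := by
  classical
  ext1 n
  have hU : (U - 1 : PowerSeries (Polynomial ℚ)) = PowerSeries.C (Polynomial.X - 1) := by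
    simp [U]
  rw [map_add, hU, PowerSeries.coeff_C_mul]
  simp only [gf, Etu, PowerSeries.coeff_mk]
  have hK : (#(KK n) : Polynomial ℚ) =
      ∑ σ : Equiv.Perm (Fin n), if IsKing σ then 1 else 0 := by
    have : KK n = (Finset.univ.filter (fun σ : Equiv.Perm (Fin n) => IsKing σ)).image toL := by
      simp only [KK, L, Finset.filter_image, king_iff]
    rw [this, Finset.card_image_of_injective _ toL_inj, Finset.sum_boole]
  have hD : (#(DD n) : Polynomial ℚ) =
      ∑ σ : Equiv.Perm (Fin n), if IsKing σ ∧ ∃ i j, LOccAt (toL σ) i j then 1 else 0 := by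
    have : DD n = (Finset.univ.filter (fun σ : Equiv.Perm (Fin n) =>
        IsKing σ ∧ ∃ i j, LOccAt (toL σ) i j)).image toL := by
      simp only [DD, L, Finset.filter_image, king_iff]
    rw [this, Finset.card_image_of_injective _ toL_inj, Finset.sum_boole]
  rw [hK, hD, Finset.mul_sum, ← Finset.sum_add_distrib]
  apply Finset.sum_congr rfl
  intro σ _
  rw [occP_eq]
  by_cases h1 : IsKing σ <;> by_cases h2 : ∃ i j, LOccAt (toL σ) i j <;> simp [h1, h2]

end KingPf

theorem statement_11 :
    (1 + T) ^ 2 * Etu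
      = ((1 + T) ^ 2 + T ^ 2 * (1 - U) * ((1 + T) ^ 2 - kingAu ^ 2)) * kingAu := by
  have h1 := KingPf.gf_DD
  have h2 := KingPf.gf_KK
  rw [KingPf.Etu_eq, KingPf.kingAu_eq]
  linear_combination (1 + T) ^ 2 * (U - 1) * h1 -
    T ^ 2 * (U - 1) * KingPf.gf KingPf.KK * (KingPf.gf KingPf.KK + (1 + T) * KingPf.gf KingPf.BB) * h2
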